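/- In the two-player game G constructed from an X3C instance, let 𝒱 be a payment promise with 𝒳⋆_{G[𝒱]} ⊆ O_1 × O_2 and cost(𝒱) = 0, and let C_j ∈ 𝒞 and a_i ∈ C_j be such that c_j^{a_i} is undominated for player 1 in G[𝒱]. Then there exists a set C_l ∈ 𝒞 with a_{i+1} ∈ C_l such that c_l^{a_{i+1}} is undominated for player 2 in G[𝒱] (index i+1 taken modulo 3n̂). -/

import Mathlib

/-!
A promise of cost zero pays nothing on undominated profiles. Hence, when the opponents of a player
play undominated strategies, the payoff of any strategy `y` of this player is already matched in
the original game by an undominated strategy: one that weakly dominates `y` in `G[𝒱]`. Against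
`c_j^{a_i}` the strategy `a_{i+1}` of player 2 earns `1`, so some undominated strategy of player 2
earns at least `1` there. It is desired, and among the desired strategies only the `c_l^{a_{i+1}}`
earn a positive amount against `c_j^{a_i}`.
-/

/-- In a game with player set `ι` and strategy sets `S i`, strategy `x` of player `i`
(weakly) dominates strategy `y`: `x` is at least as good against every profile of the
other players' strategies and strictly better against at least one. -/
def Dominates {ι : Type*} [DecidableEq ι] {S : ι → Type*}
    (U : ι → (∀ j, S j) → ℝ) (i : ι) (x y : S i) : Prop :=
  (∀ σ : ∀ j, S j, U i (Function.update σ i y) ≤ U i (Function.update σ i x)) ∧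
  (∃ σ : ∀ j, S j, U i (Function.update σ i y) < U i (Function.update σ i x))

/-- A strategy of player `i` is undominated if no strategy of player `i` dominates it. -/
def Undominated {ι : Type*} [DecidableEq ι] {S : ι → Type*}
    (U : ι → (∀ j, S j) → ℝ) (i : ι) (x : S i) : Prop :=
  ¬ ∃ y : S i, Dominates U i y x

/-- The set `𝒳⋆` of strategy profiles consisting entirely of undominated strategies. -/
def UndomProfiles {ι : Type*} [DecidableEq ι] {S : ι → Type*}
    (U : ι → (∀ j, S j) → ℝ) : Set (∀ j, S j) :=
  {σ | ∀ i, Undominated U i (σ i)}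

/-- The cost of a payment promise `V` for the game with utilities `U`:
the maximum, over undominated profiles of the modified game `G[V]`,
of the total payment. -/
noncomputable def gameCost {ι : Type*} [DecidableEq ι] [Fintype ι] {S : ι → Type*}
    (U V : ι → (∀ j, S j) → ℝ) : ℝ :=
  sSup ((fun σ => ∑ i, V i σ) '' UndomProfiles (fun i σ => U i σ + V i σ))

/-- The rectangular strategy-profile region `O_1 × ⋯ × O_n`. -/
def rectSet {ι : Type*} {S : ι → Type*} (O : ∀ i, Set (S i)) : Set (∀ j, S j) :=
  {σ | ∀ i, σ i ∈ O i}

/-- `S` is an exact cover of the X3C instance with `3 * nh` elements (indexed by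
`ZMod m`, `m = 3 * nh`) and sets `C`: `|S| = nh` and every element is covered. -/
def IsExactCover (m nh : ℕ) (C : ZMod m → Finset (ZMod m)) (S : Set (ZMod m)) : Prop :=
  S.ncard = nh ∧ ∀ a : ZMod m, ∃ j ∈ S, a ∈ C j

/-- The common strategy set of the two players: an element strategy `a_i` (left) or a
strategy `c_j^{a_i}` for a set `C_j` and an element `a_i ∈ C_j` (right). -/
def X3CStrat (m : ℕ) (C : ZMod m → Finset (ZMod m)) : Type :=
  ZMod m ⊕ {p : ZMod m × ZMod m // p.2 ∈ C p.1}

/-- Utility of player 1 (first argument is player 1's strategy):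
`U_1(a_i, c_j^{a_i}) = 2` and `U_1(a_i, c_j^{a_m}) = 1` for `a_m ∈ C_j ∖ {a_i}`
(whenever `a_i ∈ C_j`), `U_1(c_j^{a_i}, c_j^{a_i}) = 2` and
`U_1(c_j^{a_i}, c_j^{a_m}) = 1` for `a_m ∈ C_j ∖ {a_i}`; all other values are 0. -/
def xU1 (m : ℕ) (C : ZMod m → Finset (ZMod m)) :
    X3CStrat m C → X3CStrat m C → ℝ
  | Sum.inl a, Sum.inr p => if a ∈ C p.1.1 then (if p.1.2 = a then 2 else 1) else 0
  | Sum.inr q, Sum.inr p =>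
      if p.1.1 = q.1.1 then (if p.1.2 = q.1.2 then 2 else 1) else 0
  | _, _ => 0

/-- Utility of player 2 (first argument is player 1's strategy):
`U_2(c_p^{a_{i-1}}, a_i) = 1` and `U_2(c_p^{a_{i-1}}, c_j^{a_i}) = 1`
(indices mod `3 nh`); all other values are 0. -/
def xU2 (m : ℕ) (C : ZMod m → Finset (ZMod m)) :
    X3CStrat m C → X3CStrat m C → ℝ
  | Sum.inr q, Sum.inl a => if q.1.2 = a - 1 then 1 else 0
  | Sum.inr q, Sum.inr p => if q.1.2 = p.1.2 - 1 then 1 else 0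
  | _, _ => 0

/-- The two-player game built from the X3C instance. -/
def xGame (m : ℕ) (C : ZMod m → Finset (ZMod m)) :
    Fin 2 → (Fin 2 → X3CStrat m C) → ℝ :=
  fun i σ => if i = 0 then xU1 m C (σ 0) (σ 1) else xU2 m C (σ 0) (σ 1)

/-- The desired strategy set `O_1 = O_2 = {c_j^{a_i} : C_j ∈ 𝒞, a_i ∈ C_j}`. -/
def xDesired (m : ℕ) (C : ZMod m → Finset (ZMod m)) : Set (X3CStrat m C) :=
  Set.range Sum.inr

section Games

variable {ι : Type*} [DecidableEq ι] {S : ι → Type*} {U V : ι → (∀ j, S j) → ℝ} {i : ι}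

lemma Dominates.irrefl (x : S i) : ¬ Dominates U i x x :=
  fun ⟨_, _, hlt⟩ => hlt.false

lemma Dominates.trans {x y z : S i} (hxy : Dominates U i x y) (hyz : Dominates U i y z) :
    Dominates U i x z :=
  let ⟨σ, hσ⟩ := hyz.2
  ⟨fun τ => (hyz.1 τ).trans (hxy.1 τ), σ, hσ.trans_le (hxy.1 σ)⟩

lemma exists_undominated_dominates [Finite (S i)] {y : S i} (hy : ¬ Undominated U i y) :
    ∃ z, Undominated U i z ∧ Dominates U i z y := by
  have : IsTrans (S i) (Dominates U i) := ⟨fun _ _ _ => Dominates.trans⟩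
  have : Std.Irrefl (Dominates U i) := ⟨Dominates.irrefl⟩
  have wf : WellFounded (Dominates U i) := Finite.wellFounded_of_trans_of_irrefl _
  obtain ⟨z, hzy, hz_max⟩ := wf.has_min {z | Dominates U i z y} (not_not.mp hy)
  exact ⟨z, fun ⟨w, hwz⟩ => hz_max w (hwz.trans hzy) hwz, hzy⟩

lemma exists_undominated_forall_le (U : ι → (∀ j, S j) → ℝ) [Finite (S i)] (y : S i) :
    ∃ z, Undominated U i z ∧
      ∀ σ, U i (Function.update σ i y) ≤ U i (Function.update σ i z) := by
  by_cases hy : Undominated U i y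
  · exact ⟨y, hy, fun _ => le_rfl⟩
  · obtain ⟨z, hz, hzy⟩ := exists_undominated_dominates hy
    exact ⟨z, hz, hzy.1⟩

lemma update_mem_undomProfiles {σ : ∀ j, S j} (hσ : ∀ k, k ≠ i → Undominated U k (σ k))
    {z : S i} (hz : Undominated U i z) : Function.update σ i z ∈ UndomProfiles U :=
  (Function.forall_update_iff σ fun k x => Undominated U k x).2 ⟨hz, hσ⟩

lemma Undominated.mem_of_undomProfiles_subset_rectSet {O : ∀ j, Set (S j)}
    (hO : UndomProfiles U ⊆ rectSet O) {σ : ∀ j, S j}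
    (hσ : ∀ k, k ≠ i → Undominated U k (σ k)) {z : S i} (hz : Undominated U i z) : z ∈ O i := by
  simpa only [Function.update_self] using hO (update_mem_undomProfiles hσ hz) i

section Cost

variable [Fintype ι] [∀ j, Finite (S j)]

lemma sum_payment_le_gameCost {σ : ∀ j, S j}
    (hσ : σ ∈ UndomProfiles (fun i σ => U i σ + V i σ)) : ∑ i, V i σ ≤ gameCost U V :=
  le_csSup (Set.toFinite _).bddAbove (Set.mem_image_of_mem _ hσ)

lemma payment_eq_zero_of_gameCost_eq_zero (hV : ∀ i σ, 0 ≤ V i σ) (hcost : gameCost U V = 0)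
    {σ : ∀ j, S j} (hσ : σ ∈ UndomProfiles (fun i σ => U i σ + V i σ)) (i : ι) :
    V i σ = 0 := by
  have hsum : ∑ k, V k σ = 0 :=
    ((sum_payment_le_gameCost hσ).trans_eq hcost).antisymm (Finset.sum_nonneg fun k _ => hV k σ)
  exact (Finset.sum_eq_zero_iff_of_nonneg fun k _ => hV k σ).1 hsum i (Finset.mem_univ i)

lemma exists_undominated_utility_le_of_gameCost_eq_zero (hV : ∀ i σ, 0 ≤ V i σ)
    (hcost : gameCost U V = 0) {σ : ∀ j, S j}
    (hσ : ∀ k, k ≠ i → Undominated (fun i σ => U i σ + V i σ) k (σ k)) (y : S i) :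
    ∃ z, Undominated (fun i σ => U i σ + V i σ) i z ∧
      U i (Function.update σ i y) ≤ U i (Function.update σ i z) := by
  obtain ⟨z, hz, hyz⟩ := exists_undominated_forall_le (fun i σ => U i σ + V i σ) y
  have hpay : V i (Function.update σ i z) = 0 :=
    payment_eq_zero_of_gameCost_eq_zero hV hcost (update_mem_undomProfiles hσ hz) i
  refine ⟨z, hz, ?_⟩
  calc U i (Function.update σ i y)
      ≤ U i (Function.update σ i y) + V i (Function.update σ i y) :=
        le_add_of_nonneg_right (hV i _)
    _ ≤ U i (Function.update σ i z) + V i (Function.update σ i z) := hyz σ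
    _ = U i (Function.update σ i z) := by rw [hpay, add_zero]

end Cost

end Games

section ExactCoverGame

variable {m : ℕ} {C : ZMod m → Finset (ZMod m)}

instance X3CStrat.instFinite [NeZero m] : Finite (X3CStrat m C) :=
  inferInstanceAs (Finite (ZMod m ⊕ {p : ZMod m × ZMod m // p.2 ∈ C p.1}))

lemma xGame_one_update (σ : Fin 2 → X3CStrat m C) (y : X3CStrat m C) :
    xGame m C 1 (Function.update σ 1 y) = xU2 m C (σ 0) y := by
  simp [xGame]

lemma xU2_inr_inl_add_one (q : {p : ZMod m × ZMod m // p.2 ∈ C p.1}) :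
    xU2 m C (Sum.inr q) (Sum.inl (q.1.2 + 1)) = 1 := by
  simp [xU2]

lemma xU2_inr_inr_pos_iff {q p : {p : ZMod m × ZMod m // p.2 ∈ C p.1}} :
    0 < xU2 m C (Sum.inr q) (Sum.inr p) ↔ p.1.2 = q.1.2 + 1 := by
  rw [← sub_eq_iff_eq_add, eq_comm]
  simp only [xU2]
  split_ifs with h <;> simp [h]

end ExactCoverGame

theorem x3c_claim2_general (m : ℕ) [NeZero m] (C : ZMod m → Finset (ZMod m))
    (V : Fin 2 → (Fin 2 → X3CStrat m C) → ℝ)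
    (hV : ∀ i σ, 0 ≤ V i σ)
    (himpl : UndomProfiles (fun i σ => xGame m C i σ + V i σ) ⊆
      rectSet (fun _ : Fin 2 => xDesired m C))
    (hcost : gameCost (xGame m C) V = 0)
    (j a : ZMod m) (ha : a ∈ C j)
    (hund : Undominated (fun i σ => xGame m C i σ + V i σ) (0 : Fin 2)
      (Sum.inr ⟨(j, a), ha⟩)) :
    ∃ l : ZMod m, ∃ hl : a + 1 ∈ C l,
      Undominated (fun i σ => xGame m C i σ + V i σ) (1 : Fin 2)
        (Sum.inr ⟨(l, a + 1), hl⟩) := by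
  let x : X3CStrat m C := Sum.inr ⟨(j, a), ha⟩
  let y : X3CStrat m C := Sum.inl (a + 1)
  have hopp : ∀ k : Fin 2, k ≠ 1 → Undominated (fun i σ => xGame m C i σ + V i σ) k x := by
    simpa [Fin.forall_fin_two] using hund
  -- Player 2's entry of the constant profile `x` is immaterial: it is always overwritten.
  obtain ⟨z, hz, hle⟩ := exists_undominated_utility_le_of_gameCost_eq_zero
    (σ := fun _ => x) hV hcost hopp y
  have hpos : 0 < xU2 m C x z :=
    calc 0 < 1 := one_pos
      _ = xU2 m C x y := (xU2_inr_inl_add_one ⟨(j, a), ha⟩).symm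
      _ ≤ xU2 m C x z := by simpa only [xGame_one_update] using hle
  obtain ⟨⟨⟨l, b⟩, hb⟩, rfl⟩ :=
    hz.mem_of_undomProfiles_subset_rectSet himpl (σ := fun _ => x) hopp
  obtain rfl : b = a + 1 := xU2_inr_inr_pos_iff.1 hpos
  exact ⟨l, hb, hz⟩

/-- with a zero-cost implementation `𝒱` of `O_1 × O_2`, if `c_j^{a_i}` is
undominated for player 1 in `G[𝒱]`, then some strategy `c_l^{a_{i+1}}` with
`a_{i+1} ∈ C_l` is undominated for player 2 (index `i + 1` mod `3 nh`). -/
theorem x3c_claim2 (m nh : ℕ) [NeZero m] (hm : m = 3 * nh)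
    (C : ZMod m → Finset (ZMod m))
    (hC : ∀ j : ZMod m, (C j).card = 3)
    (hocc : ∀ a : ZMod m, Set.ncard {j : ZMod m | a ∈ C j} = 3)
    (V : Fin 2 → (Fin 2 → X3CStrat m C) → ℝ)
    (hV : ∀ i σ, 0 ≤ V i σ)
    (himpl : UndomProfiles (fun i σ => xGame m C i σ + V i σ) ⊆
      rectSet (fun _ : Fin 2 => xDesired m C))
    (hcost : gameCost (xGame m C) V = 0)
    (j a : ZMod m) (ha : a ∈ C j)
    (hund : Undominated (fun i σ => xGame m C i σ + V i σ) (0 : Fin 2)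
      (Sum.inr ⟨(j, a), ha⟩)) :
    ∃ l : ZMod m, ∃ hl : a + 1 ∈ C l,
      Undominated (fun i σ => xGame m C i σ + V i σ) (1 : Fin 2)
        (Sum.inr ⟨(l, a + 1), hl⟩) :=
  x3c_claim2_general m C V hV himpl hcost j a ha hund
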